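/- (Termination condition) For every positive semidefinite d×d matrix ρ with tr(ρ) = 1: t(ρ) = 1 if and only if the only vector of ℂ^d lying both in the reachable space H_R(ρ) and in PD is the zero vector. -/

import Mathlib

noncomputable section
open Matrix
open scoped ComplexOrder

variable {d m r : ℕ}

/-- One step of process `i`: `T_i(ρ) = E_i(M₁ ρ M₁†) = ∑_j (E_{i,j} M₁) ρ (E_{i,j} M₁)†`. -/
def Tstep (E : Fin m → Fin r → Matrix (Fin d) (Fin d) ℂ)
    (M1 : Matrix (Fin d) (Fin d) ℂ) (i : Fin m)
    (ρ : Matrix (Fin d) (Fin d) ℂ) : Matrix (Fin d) (Fin d) ℂ :=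
  ∑ j, (E i j * M1) * ρ * (E i j * M1)ᴴ

/-- `T_f` for a word `f = s₁⋯s_n`: apply `T_{s₁}` first, then `T_{s₂}`, …, `T_{s_n}`. -/
def Tword (E : Fin m → Fin r → Matrix (Fin d) (Fin d) ℂ)
    (M1 : Matrix (Fin d) (Fin d) ℂ) (f : List (Fin m))
    (ρ : Matrix (Fin d) (Fin d) ℂ) : Matrix (Fin d) (Fin d) ℂ :=
  f.foldl (fun σ k => Tstep E M1 k σ) ρ

/-- The support of a matrix: its column space, as a subspace of `ℂ^d`. -/
def supp (A : Matrix (Fin d) (Fin d) ℂ) : Submodule ℂ (Fin d → ℂ) :=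
  LinearMap.range (Matrix.toLin' A)

/-- Length-`n` prefix of a schedule. -/
def prefixn (s : ℕ → Fin m) (n : ℕ) : List (Fin m) :=
  List.ofFn (fun i : Fin n => s i)

/-- Termination probability within a word `f`. -/
def tWord (E : Fin m → Fin r → Matrix (Fin d) (Fin d) ℂ)
    (M0 M1 : Matrix (Fin d) (Fin d) ℂ) (f : List (Fin m))
    (ρ : Matrix (Fin d) (Fin d) ℂ) : ℝ :=
  ∑ n ∈ Finset.range (f.length + 1),
    (M0 * Tword E M1 (f.take n) ρ * M0ᴴ).trace.re

/-- Termination probability along a schedule `s`. -/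
def tSched (E : Fin m → Fin r → Matrix (Fin d) (Fin d) ℂ)
    (M0 M1 : Matrix (Fin d) (Fin d) ℂ) (s : ℕ → Fin m)
    (ρ : Matrix (Fin d) (Fin d) ℂ) : ℝ :=
  ∑' n : ℕ, (M0 * Tword E M1 (prefixn s n) ρ * M0ᴴ).trace.re

/-- Termination probability `t(ρ)`: infimum over all schedules. -/
def tInf (E : Fin m → Fin r → Matrix (Fin d) (Fin d) ℂ)
    (M0 M1 : Matrix (Fin d) (Fin d) ℂ)
    (ρ : Matrix (Fin d) (Fin d) ℂ) : ℝ :=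
  ⨅ s : ℕ → Fin m, tSched E M0 M1 s ρ

/-- The reachable space `H_{R(ρ)}`. -/
def HR (E : Fin m → Fin r → Matrix (Fin d) (Fin d) ℂ)
    (M1 : Matrix (Fin d) (Fin d) ℂ)
    (ρ : Matrix (Fin d) (Fin d) ℂ) : Submodule ℂ (Fin d → ℂ) :=
  ⨆ f : List (Fin m), supp (Tword E M1 f ρ)

/-- The average super-operator `T = (1/m) ∑ T_i`. -/
def Tavg (E : Fin m → Fin r → Matrix (Fin d) (Fin d) ℂ)
    (M1 : Matrix (Fin d) (Fin d) ℂ)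
    (ρ : Matrix (Fin d) (Fin d) ℂ) : Matrix (Fin d) (Fin d) ℂ :=
  ((m : ℂ)⁻¹) • ∑ i : Fin m, Tstep E M1 i ρ

/-- `H_{R̄_n(ρ)} = ⋁_{k=0}^n supp(T^k(ρ))`. -/
def HRbar (E : Fin m → Fin r → Matrix (Fin d) (Fin d) ℂ)
    (M1 : Matrix (Fin d) (Fin d) ℂ)
    (ρ : Matrix (Fin d) (Fin d) ℂ) (n : ℕ) : Submodule ℂ (Fin d → ℂ) :=
  ⨆ k : Fin (n + 1), supp ((Tavg E M1)^[k] ρ)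

/-- Reachable termination probability `h(ρ)`. -/
def hProb (E : Fin m → Fin r → Matrix (Fin d) (Fin d) ℂ)
    (M0 M1 : Matrix (Fin d) (Fin d) ℂ)
    (ρ : Matrix (Fin d) (Fin d) ℂ) : ℝ :=
  sInf { x : ℝ | ∃ σ : Matrix (Fin d) (Fin d) ℂ,
    σ.PosSemidef ∧ σ.trace = 1 ∧ supp σ ≤ HR E M1 ρ ∧ x = tInf E M0 M1 σ }

/-- `PD_f`: pure states diverging within the word `f`. -/
def PDword (E : Fin m → Fin r → Matrix (Fin d) (Fin d) ℂ)
    (M0 M1 : Matrix (Fin d) (Fin d) ℂ) (f : List (Fin m)) : Set (Fin d → ℂ) :=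
  { x : Fin d → ℂ | tWord E M0 M1 f (Matrix.vecMulVec x (star x)) = 0 }

/-- `PD_n`: union of `PD_f` over words of length `n`. -/
def PDn (E : Fin m → Fin r → Matrix (Fin d) (Fin d) ℂ)
    (M0 M1 : Matrix (Fin d) (Fin d) ℂ) (n : ℕ) : Set (Fin d → ℂ) :=
  { x : Fin d → ℂ | ∃ f : List (Fin m), f.length = n ∧ x ∈ PDword E M0 M1 f }

/-- `PD`: the diverging pure states. -/
def PD (E : Fin m → Fin r → Matrix (Fin d) (Fin d) ℂ)
    (M0 M1 : Matrix (Fin d) (Fin d) ℂ) : Set (Fin d → ℂ) :=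
  { x : Fin d → ℂ | ∃ s : ℕ → Fin m, tSched E M0 M1 s (Matrix.vecMulVec x (star x)) = 0 }

/-!
The survival probability `tr (T_{s(≤n)} ρ)` decreases in `n` to `tr ρ - t_s(ρ)`, so `t(ρ) = tr ρ`
means that it decays to `0` along every schedule.

If it does, and `s` is a schedule, then prepending words to `s` shows that the survival probability
of each `T_f ρ` along `s` decays to `0`. The vectors whose survival probability along `s` decays
form a subspace (parallelogram law), which therefore contains `H_R(ρ)`. A vector `x` that diverges
along `s` survives with constant probability `‖x‖²`, so it lies there only if it is zero.

If instead the survival probability has a positive limit along some `s`, then the ratio of its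
values at times `k + n` and `k` tends to `1` as `k → ∞`. Decomposing `T_{s(≤k)} ρ` into pure states
gives unit vectors of `H_R(ρ)` surviving `n` steps of some schedule with probability arbitrarily
close to `1`, and compactness of (unit sphere of `H_R(ρ)`) × (schedules) yields one that survives
forever.
-/

open Filter Topology

/-- The unnormalised pure state `x x†` of a vector `x`. -/
local notation "ketbra" x:max => Matrix.vecMulVec x (star x)

section PureStates

variable {𝕜 n ι : Type*} [RCLike 𝕜]

lemma ketbra_add_add_ketbra_sub (x y : n → 𝕜) :
    ketbra (x + y) + ketbra (x - y) = (2 : ℝ) • ketbra x + (2 : ℝ) • ketbra y := by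
  simp only [star_add, star_sub, add_vecMulVec, sub_vecMulVec, vecMulVec_add, vecMulVec_sub,
    two_smul]
  abel

lemma ketbra_smul (c : 𝕜) (x : n → 𝕜) : ketbra (c • x) = ‖c‖ ^ 2 • ketbra x := by
  rw [star_smul, smul_vecMulVec, vecMulVec_smul, smul_smul, RCLike.star_def, RCLike.mul_conj,
    ← RCLike.ofReal_pow, RCLike.real_smul_eq_coe_smul (K := 𝕜)]

variable [Fintype n]

lemma re_trace_ketbra_eq_zero_iff (x : n → ℂ) : (ketbra x).trace.re = 0 ↔ x = 0 := by
  have norm_sq_nonneg : 0 ≤ star x ⬝ᵥ x := dotProduct_star_self_nonneg x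
  rw [trace_vecMulVec, dotProduct_comm, ← dotProduct_star_self_eq_zero (v := x), Complex.ext_iff]
  exact ⟨fun h => ⟨h, (Complex.le_def.1 norm_sq_nonneg).2.symm⟩, And.left⟩

lemma range_mulVecLin_self_mul_conjTranspose [Fintype ι] (A : Matrix n ι 𝕜) :
    LinearMap.range (A * Aᴴ).mulVecLin = LinearMap.range A.mulVecLin :=
  Submodule.eq_of_le_of_finrank_eq
    (by rw [mulVecLin_mul]; exact LinearMap.range_comp_le_range _ _)
    (rank_self_mul_conjTranspose A)

lemma range_mulVecLin_sum_ketbra [Fintype ι] (v : ι → n → 𝕜) :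
    LinearMap.range (∑ k, ketbra (v k)).mulVecLin = Submodule.span 𝕜 (Set.range v) := by
  have factorization : ∑ k, ketbra (v k) = (of v)ᵀ * (of v)ᵀᴴ := by
    ext i j
    simp [Matrix.sum_apply, vecMulVec_apply, mul_apply]
  rw [factorization, range_mulVecLin_self_mul_conjTranspose, range_mulVecLin]
  rfl

end PureStates

lemma re_trace_nonneg_of_posSemidef {n : Type*} [Fintype n] {a : Matrix n n ℂ}
    (ha : a.PosSemidef) : 0 ≤ a.trace.re :=
  (Complex.le_def.1 ha.trace_nonneg).1

lemma exists_eq_sum_ketbra_and_supp_eq_span {a : Matrix (Fin d) (Fin d) ℂ} (ha : a.PosSemidef) :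
    ∃ (k : ℕ) (v : Fin k → Fin d → ℂ),
      a = ∑ i, ketbra (v i) ∧ supp a = Submodule.span ℂ (Set.range v) := by
  obtain ⟨k, v, rfl⟩ := posSemidef_iff_eq_sum_vecMulVec.1 ha
  exact ⟨k, v, rfl, range_mulVecLin_sum_ketbra v⟩

section Schedules

lemma prefixn_zero (s : ℕ → Fin m) : prefixn s 0 = [] :=
  List.ofFn_zero

lemma prefixn_add (s : ℕ → Fin m) (n k : ℕ) :
    prefixn s (n + k) = prefixn s n ++ prefixn (fun i => s (n + i)) k :=
  List.ofFn_add

lemma prefixn_succ (s : ℕ → Fin m) (n : ℕ) : prefixn s (n + 1) = prefixn s n ++ [s n] := by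
  rw [prefixn_add]
  rfl

lemma exists_prefixn_length_add_eq_append (f : List (Fin m)) (s : ℕ → Fin m) :
    ∃ s' : ℕ → Fin m, ∀ n, prefixn s' (f.length + n) = f ++ prefixn s n := by
  refine ⟨fun i => if h : i < f.length then f[i] else s (i - f.length), fun n => ?_⟩
  rw [prefixn_add]
  congr 1
  · exact List.ext_getElem (by simp [prefixn]) (by simp +contextual [prefixn])
  · simp

end Schedules

variable {E : Fin m → Fin r → Matrix (Fin d) (Fin d) ℂ} {M0 M1 : Matrix (Fin d) (Fin d) ℂ}
  {a : Matrix (Fin d) (Fin d) ℂ}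

section Superoperators

lemma isLinearMap_Tstep (i : Fin m) : IsLinearMap ℂ (Tstep E M1 i) where
  map_add a b := by simp only [Tstep, Matrix.mul_add, Matrix.add_mul, Finset.sum_add_distrib]
  map_smul c a := by simp only [Tstep, Matrix.mul_smul, Matrix.smul_mul, Finset.smul_sum]

lemma posSemidef_Tstep (i : Fin m) (ha : a.PosSemidef) : (Tstep E M1 i a).PosSemidef :=
  posSemidef_sum _ fun _ _ => ha.mul_mul_conjTranspose_same _

lemma continuous_Tstep :
    Continuous fun q : Fin m × Matrix (Fin d) (Fin d) ℂ => Tstep E M1 q.1 q.2 := by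
  refine continuous_prod_of_discrete_left.2 fun i => ?_
  simp only [Tstep]
  fun_prop

lemma Tword_nil (a : Matrix (Fin d) (Fin d) ℂ) : Tword E M1 [] a = a :=
  rfl

lemma Tword_append (f g : List (Fin m)) (a : Matrix (Fin d) (Fin d) ℂ) :
    Tword E M1 (f ++ g) a = Tword E M1 g (Tword E M1 f a) :=
  List.foldl_append

lemma Tword_prefixn_succ (s : ℕ → Fin m) (n : ℕ) (a : Matrix (Fin d) (Fin d) ℂ) :
    Tword E M1 (prefixn s (n + 1)) a = Tstep E M1 (s n) (Tword E M1 (prefixn s n) a) := by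
  rw [prefixn_succ, Tword_append]
  rfl

lemma isLinearMap_Tword (f : List (Fin m)) : IsLinearMap ℂ (Tword E M1 f) := by
  induction f with
  | nil => exact LinearMap.id.isLinear
  | cons i f ih => exact (ih.mk' _ ∘ₗ (isLinearMap_Tstep i).mk' _).isLinear

lemma posSemidef_Tword (f : List (Fin m)) (ha : a.PosSemidef) : (Tword E M1 f a).PosSemidef := by
  induction f generalizing a with
  | nil => exact ha
  | cons i _ ih => exact ih (posSemidef_Tstep i ha)

lemma continuous_Tword_prefixn (n : ℕ) :
    Continuous fun p : Matrix (Fin d) (Fin d) ℂ × (ℕ → Fin m) =>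
      Tword E M1 (prefixn p.2 n) p.1 := by
  induction n with
  | zero => simpa only [prefixn_zero, Tword_nil] using continuous_fst
  | succ n ih =>
    have continuous_letter :
        Continuous fun p : Matrix (Fin d) (Fin d) ℂ × (ℕ → Fin m) => p.2 n := by
      fun_prop
    simpa only [Function.comp_def, Tword_prefixn_succ] using
      continuous_Tstep.comp (continuous_letter.prodMk ih)

/-- Conservation of probability: every step splits the trace between the halting branch `M₀ a M₀†`
and the continuing branch `T_i a`. -/
def ConservesTrace (E : Fin m → Fin r → Matrix (Fin d) (Fin d) ℂ)
    (M0 M1 : Matrix (Fin d) (Fin d) ℂ) : Prop :=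
  ∀ i a, (M0 * a * M0ᴴ).trace + (Tstep E M1 i a).trace = a.trace

lemma conservesTrace_of_sum_conjTranspose_mul_self (hE : ∀ i, ∑ j, (E i j)ᴴ * E i j = 1)
    (hM : M0ᴴ * M0 + M1ᴴ * M1 = 1) : ConservesTrace E M0 M1 := by
  have trace_conj (A a : Matrix (Fin d) (Fin d) ℂ) : (A * a * Aᴴ).trace = (Aᴴ * A * a).trace := by
    rw [trace_mul_comm, Matrix.mul_assoc]
  intro i a
  have trace_Tstep : (Tstep E M1 i a).trace = (M1ᴴ * M1 * a).trace :=
    calc (Tstep E M1 i a).trace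
        = ∑ j, (E i j * (M1 * a * M1ᴴ) * (E i j)ᴴ).trace := by
          simp only [Tstep, trace_sum, conjTranspose_mul, Matrix.mul_assoc]
      _ = ((∑ j, (E i j)ᴴ * E i j) * (M1 * a * M1ᴴ)).trace := by
          simp only [trace_conj, ← trace_sum, Finset.sum_mul]
      _ = (M1ᴴ * M1 * a).trace := by rw [hE, Matrix.one_mul, trace_conj]
  rw [trace_Tstep, trace_conj, ← trace_add, ← Matrix.add_mul, hM, Matrix.one_mul]

end Superoperators

section Survival

/-- The probability `tr (T_f a)` that the program, started in `a`, has not halted after running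
through the word `f`. As all states are Hermitian, nothing is lost in taking the real part, and the
result is `ℝ`-linear in `a`. -/
def survival (E : Fin m → Fin r → Matrix (Fin d) (Fin d) ℂ) (M1 : Matrix (Fin d) (Fin d) ℂ)
    (f : List (Fin m)) : Matrix (Fin d) (Fin d) ℂ →ₗ[ℝ] ℝ :=
  Complex.reLm ∘ₗ
    (traceLinearMap (Fin d) ℂ ℂ ∘ₗ (isLinearMap_Tword (E := E) (M1 := M1) f).mk').restrictScalars ℝ

lemma survival_apply (f : List (Fin m)) (a : Matrix (Fin d) (Fin d) ℂ) :
    survival E M1 f a = (Tword E M1 f a).trace.re :=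
  rfl

lemma survival_append (f g : List (Fin m)) (a : Matrix (Fin d) (Fin d) ℂ) :
    survival E M1 (f ++ g) a = survival E M1 g (Tword E M1 f a) := by
  rw [survival_apply, Tword_append, survival_apply]

lemma survival_prefixn_zero (s : ℕ → Fin m) (a : Matrix (Fin d) (Fin d) ℂ) :
    survival E M1 (prefixn s 0) a = a.trace.re := by
  rw [prefixn_zero, survival_apply, Tword_nil]

lemma survival_nonneg (f : List (Fin m)) (ha : a.PosSemidef) : 0 ≤ survival E M1 f a :=
  re_trace_nonneg_of_posSemidef (posSemidef_Tword f ha)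

lemma survival_ketbra_nonneg (f : List (Fin m)) (x : Fin d → ℂ) :
    0 ≤ survival E M1 f (ketbra x) :=
  survival_nonneg f (posSemidef_vecMulVec_self_star x)

lemma continuous_survival_ketbra (n : ℕ) :
    Continuous fun p : (Fin d → ℂ) × (ℕ → Fin m) => survival E M1 (prefixn p.2 n) (ketbra p.1) := by
  have continuous_ketbra : Continuous fun p : (Fin d → ℂ) × (ℕ → Fin m) => (ketbra p.1, p.2) := by
    fun_prop
  exact Complex.continuous_re.comp
    ((continuous_Tword_prefixn n).comp continuous_ketbra).matrix_trace

/-- A mixed state is an average of pure states in its support, one of which does at least as well as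
the average. -/
lemma exists_mem_supp_lt_survival_ketbra {f : List (Fin m)} {c : ℝ} (ha : a.PosSemidef)
    (h : c * a.trace.re < survival E M1 f a) :
    ∃ x ∈ supp a, c * (ketbra x).trace.re < survival E M1 f (ketbra x) := by
  obtain ⟨k, v, rfl, hsupp⟩ := exists_eq_sum_ketbra_and_supp_eq_span ha
  rw [trace_sum, Complex.re_sum, Finset.mul_sum, map_sum] at h
  obtain ⟨i, -, hi⟩ := Finset.exists_lt_of_sum_lt h
  exact ⟨v i, hsupp ▸ Submodule.subset_span ⟨i, rfl⟩, hi⟩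

lemma re_trace_halt_eq_survival_sub (h : ConservesTrace E M0 M1) (s : ℕ → Fin m) (n : ℕ)
    (a : Matrix (Fin d) (Fin d) ℂ) :
    (M0 * Tword E M1 (prefixn s n) a * M0ᴴ).trace.re =
      survival E M1 (prefixn s n) a - survival E M1 (prefixn s (n + 1)) a := by
  rw [eq_sub_iff_add_eq, survival_apply, survival_apply, Tword_prefixn_succ, ← Complex.add_re, h]

lemma re_trace_halt_nonneg (f : List (Fin m)) (ha : a.PosSemidef) :
    0 ≤ (M0 * Tword E M1 f a * M0ᴴ).trace.re :=
  re_trace_nonneg_of_posSemidef ((posSemidef_Tword f ha).mul_mul_conjTranspose_same M0)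

lemma antitone_survival_prefixn (h : ConservesTrace E M0 M1) (s : ℕ → Fin m) (ha : a.PosSemidef) :
    Antitone fun n => survival E M1 (prefixn s n) a :=
  antitone_nat_of_succ_le fun n => sub_nonneg.1 <|
    re_trace_halt_eq_survival_sub h s n a ▸ re_trace_halt_nonneg (prefixn s n) ha

end Survival

section TerminationProbability

lemma tendsto_survival_prefixn (h : ConservesTrace E M0 M1) (s : ℕ → Fin m) (ha : a.PosSemidef) :
    Tendsto (fun n => survival E M1 (prefixn s n) a) atTop
      (𝓝 (a.trace.re - tSched E M0 M1 s a)) := by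
  have halt_sum (n : ℕ) : ∑ k ∈ Finset.range n, (M0 * Tword E M1 (prefixn s k) a * M0ᴴ).trace.re =
      a.trace.re - survival E M1 (prefixn s n) a := by
    simp only [re_trace_halt_eq_survival_sub h, Finset.sum_range_sub', survival_prefixn_zero]
  have halt_summable : Summable fun n => (M0 * Tword E M1 (prefixn s n) a * M0ᴴ).trace.re :=
    summable_of_sum_range_le (fun n => re_trace_halt_nonneg (prefixn s n) ha) fun n =>
      (halt_sum n).trans_le (sub_le_self _ (survival_nonneg _ ha))
  simpa only [halt_sum, sub_sub_cancel, tSched] using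
    halt_summable.hasSum.tendsto_sum_nat.const_sub a.trace.re

lemma tSched_nonneg (s : ℕ → Fin m) (ha : a.PosSemidef) : 0 ≤ tSched E M0 M1 s a :=
  tsum_nonneg fun n => re_trace_halt_nonneg (prefixn s n) ha

lemma tSched_le_trace (h : ConservesTrace E M0 M1) (s : ℕ → Fin m) (ha : a.PosSemidef) :
    tSched E M0 M1 s a ≤ a.trace.re :=
  sub_nonneg.1 <| ge_of_tendsto' (tendsto_survival_prefixn h s ha) fun _ => survival_nonneg _ ha

lemma tendsto_survival_zero_iff_tSched_eq_trace (h : ConservesTrace E M0 M1) (s : ℕ → Fin m)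
    (ha : a.PosSemidef) :
    Tendsto (fun n => survival E M1 (prefixn s n) a) atTop (𝓝 0) ↔
      tSched E M0 M1 s a = a.trace.re := by
  have tendsto_survival := tendsto_survival_prefixn h s ha
  constructor
  · intro decay
    exact (sub_eq_zero.1 (tendsto_nhds_unique tendsto_survival decay)).symm
  · intro ht
    rwa [ht, sub_self] at tendsto_survival

lemma tSched_eq_zero_of_mul_trace_le_survival (h : ConservesTrace E M0 M1) {s : ℕ → Fin m}
    (ha : a.PosSemidef) {c : ℕ → ℝ} (hc : Tendsto c atTop (𝓝 1))
    (hle : ∀ n, c n * a.trace.re ≤ survival E M1 (prefixn s n) a) : tSched E M0 M1 s a = 0 := by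
  have trace_le_limit := le_of_tendsto_of_tendsto' (hc.mul_const _)
    (tendsto_survival_prefixn h s ha) hle
  linarith [tSched_nonneg (E := E) (M0 := M0) (M1 := M1) s ha]

lemma tInf_eq_trace_iff_forall_tSched_eq_trace [Nonempty (Fin m)] (h : ConservesTrace E M0 M1)
    (ha : a.PosSemidef) :
    tInf E M0 M1 a = a.trace.re ↔ ∀ s, tSched E M0 M1 s a = a.trace.re := by
  have bounded : BddBelow (Set.range fun s => tSched E M0 M1 s a) :=
    ⟨0, Set.forall_mem_range.2 fun s => tSched_nonneg s ha⟩
  constructor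
  · intro ht s
    exact (tSched_le_trace h s ha).antisymm (ht ▸ ciInf_le bounded s)
  · intro hs
    simp only [tInf, hs, ciInf_const]

end TerminationProbability

section Decay

/-- The subspace of vectors whose survival probability along the schedule `s` decays to `0`. -/
def decaySpace (E : Fin m → Fin r → Matrix (Fin d) (Fin d) ℂ) (M1 : Matrix (Fin d) (Fin d) ℂ)
    (s : ℕ → Fin m) : Submodule ℂ (Fin d → ℂ) where
  carrier := {x | Tendsto (fun n => survival E M1 (prefixn s n) (ketbra x)) atTop (𝓝 0)}
  zero_mem' := by simp
  add_mem' {x y} hx hy := by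
    have bound (n : ℕ) : survival E M1 (prefixn s n) (ketbra (x + y)) ≤
        2 * survival E M1 (prefixn s n) (ketbra x) +
          2 * survival E M1 (prefixn s n) (ketbra y) := by
      have parallelogram :=
        congrArg (survival E M1 (prefixn s n)) (ketbra_add_add_ketbra_sub x y)
      simp only [map_add, map_smul, smul_eq_mul] at parallelogram
      linarith [survival_ketbra_nonneg (E := E) (M1 := M1) (prefixn s n) (x - y)]
    refine squeeze_zero (fun n => survival_ketbra_nonneg _ _) bound ?_
    simpa using (Tendsto.const_mul 2 hx).add (Tendsto.const_mul 2 hy)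
  smul_mem' c x hx := by
    simpa only [Set.mem_ofPred_eq, ketbra_smul, map_smul, smul_eq_mul, mul_zero] using
      Tendsto.const_mul (‖c‖ ^ 2) hx

lemma supp_le_decaySpace {s : ℕ → Fin m} (ha : a.PosSemidef)
    (decay : Tendsto (fun n => survival E M1 (prefixn s n) a) atTop (𝓝 0)) :
    supp a ≤ decaySpace E M1 s := by
  obtain ⟨k, v, rfl, hsupp⟩ := exists_eq_sum_ketbra_and_supp_eq_span ha
  rw [hsupp, Submodule.span_le, Set.range_subset_iff]
  intro i
  refine squeeze_zero (fun n => survival_ketbra_nonneg _ _) (fun n => ?_) decay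
  rw [map_sum]
  exact Finset.single_le_sum (f := fun i => survival E M1 (prefixn s n) (ketbra (v i)))
    (fun i _ => survival_ketbra_nonneg _ _) (Finset.mem_univ i)

lemma HR_le_decaySpace (ha : a.PosSemidef)
    (decay : ∀ s, Tendsto (fun n => survival E M1 (prefixn s n) a) atTop (𝓝 0)) (s : ℕ → Fin m) :
    HR E M1 a ≤ decaySpace E M1 s := by
  refine iSup_le fun f => supp_le_decaySpace (posSemidef_Tword f ha) ?_
  obtain ⟨s', hs'⟩ := exists_prefixn_length_add_eq_append f s
  have decay_tail := (tendsto_add_atTop_iff_nat f.length).2 (decay s')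
  simpa only [add_comm _ f.length, hs', survival_append] using decay_tail

lemma eq_zero_of_mem_decaySpace (h : ConservesTrace E M0 M1) {s : ℕ → Fin m} {x : Fin d → ℂ}
    (hx : x ∈ decaySpace E M1 s) (hs : tSched E M0 M1 s (ketbra x) = 0) : x = 0 := by
  have tSched_eq := (tendsto_survival_zero_iff_tSched_eq_trace h s
    (posSemidef_vecMulVec_self_star x)).1 hx
  exact (re_trace_ketbra_eq_zero_iff x).1 (tSched_eq.symm.trans hs)

end Decay

section Divergence

lemma exists_mul_survival_lt_survival_add (h : ConservesTrace E M0 M1) {s : ℕ → Fin m}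
    (ha : a.PosSemidef) (hs : tSched E M0 M1 s a < a.trace.re) {c : ℝ} (hc : c < 1) (n : ℕ) :
    ∃ k, c * survival E M1 (prefixn s k) a < survival E M1 (prefixn s (k + n)) a := by
  have tendsto_survival := tendsto_survival_prefixn h s ha
  have limit_lt : c * (a.trace.re - tSched E M0 M1 s a) < a.trace.re - tSched E M0 M1 s a :=
    mul_lt_of_lt_one_left (sub_pos.2 hs) hc
  exact ((tendsto_survival.const_mul c).eventually_lt
    ((tendsto_add_atTop_iff_nat n).2 tendsto_survival) limit_lt).exists

lemma exists_mem_HR_lt_survival_ketbra (h : ConservesTrace E M0 M1) {s : ℕ → Fin m}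
    (ha : a.PosSemidef) (hs : tSched E M0 M1 s a < a.trace.re) {c : ℝ} (hc : c < 1) (n : ℕ) :
    ∃ s', ∃ x ∈ HR E M1 a, c * (ketbra x).trace.re < survival E M1 (prefixn s' n) (ketbra x) := by
  obtain ⟨k, hk⟩ := exists_mul_survival_lt_survival_add h ha hs hc n
  rw [prefixn_add, survival_append] at hk
  obtain ⟨x, hx, hlt⟩ := exists_mem_supp_lt_survival_ketbra (posSemidef_Tword _ ha) hk
  exact ⟨_, x, le_iSup (fun f => supp (Tword E M1 f a)) (prefixn s k) hx, hlt⟩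

/-- The pairs of a unit vector of `H` and a schedule along which it survives `n` steps up to a
relative loss of `1 / (n + 1)`. The loss shrinks with `n`, so that a pair lying in all these sets
survives without loss. The unit sphere is that of the sup norm of `Fin d → ℂ`. -/
def nearSurvivors (E : Fin m → Fin r → Matrix (Fin d) (Fin d) ℂ) (M1 : Matrix (Fin d) (Fin d) ℂ)
    (H : Submodule ℂ (Fin d → ℂ)) (n : ℕ) : Set ((Fin d → ℂ) × (ℕ → Fin m)) :=
  (Metric.sphere 0 1 ∩ H) ×ˢ Set.univ ∩
    {p | (1 - 1 / ((n : ℝ) + 1)) * (ketbra p.1).trace.re ≤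
      survival E M1 (prefixn p.2 n) (ketbra p.1)}

variable {H : Submodule ℂ (Fin d → ℂ)}

lemma isCompact_nearSurvivors (n : ℕ) : IsCompact (nearSurvivors E M1 H n) := by
  have compact_domain :
      IsCompact ((Metric.sphere 0 1 ∩ H : Set (Fin d → ℂ)) ×ˢ (Set.univ : Set (ℕ → Fin m))) :=
    ((isCompact_sphere _ _).inter_right H.closed_of_finiteDimensional).prod isCompact_univ
  have continuous_trace : Continuous fun p : (Fin d → ℂ) × (ℕ → Fin m) => (ketbra p.1).trace.re :=
    Complex.continuous_re.comp (Continuous.matrix_trace (by fun_prop))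
  exact compact_domain.inter_right
    (isClosed_le (continuous_const.mul continuous_trace) (continuous_survival_ketbra n))

lemma antitone_nearSurvivors (h : ConservesTrace E M0 M1) : Antitone (nearSurvivors E M1 H) := by
  rintro n k hnk ⟨x, s⟩ ⟨hdomain, hsurvival⟩
  have hx := posSemidef_vecMulVec_self_star x
  have loss_le : 1 / ((k : ℝ) + 1) ≤ 1 / ((n : ℝ) + 1) := Nat.one_div_le_one_div hnk
  refine ⟨hdomain, ?_⟩
  calc (1 - 1 / ((n : ℝ) + 1)) * (ketbra x).trace.re
      ≤ (1 - 1 / ((k : ℝ) + 1)) * (ketbra x).trace.re :=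
        mul_le_mul_of_nonneg_right (by linarith) (re_trace_nonneg_of_posSemidef hx)
    _ ≤ survival E M1 (prefixn s k) (ketbra x) := hsurvival
    _ ≤ survival E M1 (prefixn s n) (ketbra x) := antitone_survival_prefixn h s hx hnk

lemma nearSurvivors_nonempty {n : ℕ} {s : ℕ → Fin m} {x : Fin d → ℂ} (hx : x ∈ H)
    (hlt : (1 - 1 / ((n : ℝ) + 1)) * (ketbra x).trace.re <
      survival E M1 (prefixn s n) (ketbra x)) : (nearSurvivors E M1 H n).Nonempty := by
  have x_ne_zero : x ≠ 0 := by
    rintro rfl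
    simp at hlt
  refine ⟨((‖x‖⁻¹ : ℂ) • x, s), ⟨⟨?_, H.smul_mem _ hx⟩, trivial⟩, ?_⟩
  · simp [norm_smul, x_ne_zero]
  · simp only [Set.mem_ofPred_eq, ketbra_smul, trace_smul, Complex.smul_re, map_smul, smul_eq_mul]
    rw [mul_left_comm]
    exact mul_le_mul_of_nonneg_left hlt.le (by positivity)

lemma exists_ne_zero_mem_PD_of_forall_lt_survival (h : ConservesTrace E M0 M1)
    (near : ∀ c < (1 : ℝ), ∀ n, ∃ s, ∃ x ∈ H,
      c * (ketbra x).trace.re < survival E M1 (prefixn s n) (ketbra x)) :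
    ∃ x ∈ H, x ∈ PD E M0 M1 ∧ x ≠ 0 := by
  have nonempty (n : ℕ) : (nearSurvivors E M1 H n).Nonempty := by
    obtain ⟨s, x, hx, hlt⟩ := near (1 - 1 / ((n : ℝ) + 1)) (sub_lt_self 1 (by positivity)) n
    exact nearSurvivors_nonempty hx hlt
  obtain ⟨⟨x, s⟩, hxs⟩ := IsCompact.nonempty_iInter_of_sequence_nonempty_isCompact_isClosed
    (nearSurvivors E M1 H) (fun n => antitone_nearSurvivors h n.le_succ) nonempty
    (isCompact_nearSurvivors 0) fun n => (isCompact_nearSurvivors n).isClosed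
  rw [Set.mem_iInter] at hxs
  obtain ⟨⟨⟨hsphere, hxH⟩, -⟩, -⟩ := hxs 0
  have loss_vanishes : Tendsto (fun n : ℕ => 1 - 1 / ((n : ℝ) + 1)) atTop (𝓝 1) := by
    simpa using tendsto_one_div_add_atTop_nhds_zero_nat.const_sub (1 : ℝ)
  exact ⟨x, hxH, ⟨s, tSched_eq_zero_of_mul_trace_le_survival h (posSemidef_vecMulVec_self_star x)
    loss_vanishes fun n => (hxs n).2⟩, Metric.ne_of_mem_sphere hsphere one_ne_zero⟩

end Divergence

lemma forall_tSched_eq_trace_iff (h : ConservesTrace E M0 M1) (ha : a.PosSemidef) :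
    (∀ s, tSched E M0 M1 s a = a.trace.re) ↔ ∀ x ∈ HR E M1 a, x ∈ PD E M0 M1 → x = 0 := by
  constructor
  · rintro terminates x hxH ⟨s, hxs⟩
    have decay (s') := (tendsto_survival_zero_iff_tSched_eq_trace h s' ha).2 (terminates s')
    exact eq_zero_of_mem_decaySpace h (HR_le_decaySpace ha decay s hxH) hxs
  · intro trivial_PD s
    by_contra hs
    obtain ⟨x, hxH, hxPD, hx0⟩ := exists_ne_zero_mem_PD_of_forall_lt_survival h fun c hc n =>
      exists_mem_HR_lt_survival_ketbra h ha ((tSched_le_trace h s ha).lt_of_ne hs) hc n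
    exact hx0 (trivial_PD x hxH hxPD)

/-- Termination condition: `t(ρ) = 1` iff the only vector lying in both the
reachable space `H_R(ρ)` and `PD` is `0`. -/
theorem termination_condition (d m r : ℕ) (hd : 0 < d) (hm : 0 < m)
    (E : Fin m → Fin r → Matrix (Fin d) (Fin d) ℂ)
    (hE : ∀ i, ∑ j, (E i j)ᴴ * E i j = 1)
    (M0 M1 : Matrix (Fin d) (Fin d) ℂ)
    (hM : M0ᴴ * M0 + M1ᴴ * M1 = 1)
    (ρ : Matrix (Fin d) (Fin d) ℂ) (hρ : ρ.PosSemidef) (htr : ρ.trace = 1) :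
    tInf E M0 M1 ρ = 1 ↔
      ∀ x : Fin d → ℂ, x ∈ HR E M1 ρ → x ∈ PD E M0 M1 → x = 0 := by
  have : Nonempty (Fin m) := ⟨⟨0, hm⟩⟩
  have conserves : ConservesTrace E M0 M1 := conservesTrace_of_sum_conjTranspose_mul_self hE hM
  have trace_one : ρ.trace.re = 1 := by rw [htr, Complex.one_re]
  rw [← trace_one, tInf_eq_trace_iff_forall_tSched_eq_trace conserves hρ]
  exact forall_tSched_eq_trace_iff conserves hρ
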